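/- arXiv:2007.02607 — 3 statements merged into one kernel-verified Lean document; each statement's English description precedes it below -/
import Mathlib

section
/- Let u, B : ℝ³ → ℝ³ be smooth vector fields with div u = 0 and div B = 0 on ℝ³, such that u satisfies the Navier-slip boundary condition (u₃ = ∂₃u₁ = ∂₃u₂ = 0 at every point of ∂Ω) and B satisfies the insulating boundary condition (B₁ = B₂ = 0 at every point of ∂Ω). Then curl(B × u) × n = ((u·∇)B − (B·∇)u) × n = 0 on ∂Ω; that is, the first and second components of (u·∇)B − (B·∇)u (which equals curl(B × u) since div u = div B = 0) vanish at every point of ∂Ω. -/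
noncomputable section

open MeasureTheory

/-- Points/vectors in ℝ³, indexed by `Fin 3` (so index `0,1,2` stand for coordinates `1,2,3`). -/
abbrev V3 : Type := Fin 3 → ℝ

/-- Partial derivative in the `i`-th coordinate direction. -/
def pd (i : Fin 3) (f : V3 → ℝ) (x : V3) : ℝ := fderiv ℝ f x (Pi.single i 1)

/-- Divergence of a vector field. -/
def vdiv (u : V3 → V3) (x : V3) : ℝ :=
  pd 0 (fun y => u y 0) x + pd 1 (fun y => u y 1) x + pd 2 (fun y => u y 2) x

/-- Curl of a vector field. -/
def vcurl (u : V3 → V3) (x : V3) : V3 :=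
  ![pd 1 (fun y => u y 2) x - pd 2 (fun y => u y 1) x,
    pd 2 (fun y => u y 0) x - pd 0 (fun y => u y 2) x,
    pd 0 (fun y => u y 1) x - pd 1 (fun y => u y 0) x]

/-- Laplacian of a scalar function. -/
def lap (f : V3 → ℝ) (x : V3) : ℝ :=
  pd 0 (pd 0 f) x + pd 1 (pd 1 f) x + pd 2 (pd 2 f) x

/-- Componentwise Laplacian of a vector field. -/
def vlap (u : V3 → V3) (x : V3) : V3 := fun i => lap (fun y => u y i) x

/-- Advective derivative `(u·∇)V`. -/
def adv (u V : V3 → V3) (x : V3) : V3 := fun i =>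
  u x 0 * pd 0 (fun y => V y i) x + u x 1 * pd 1 (fun y => V y i) x +
    u x 2 * pd 2 (fun y => V y i) x

/-- Cross product in ℝ³. -/
def cross (a b : V3) : V3 :=
  ![a 1 * b 2 - a 2 * b 1, a 2 * b 0 - a 0 * b 2, a 0 * b 1 - a 1 * b 0]

/-- Dot product in ℝ³. -/
def dot (a b : V3) : ℝ := a 0 * b 0 + a 1 * b 1 + a 2 * b 2

/-- Gradient of a scalar function. -/
def grad (f : V3 → ℝ) (x : V3) : V3 := fun i => pd i f x

/-- The boundary `∂Ω = {x : x₃ = 0 or x₃ = 1}`. -/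
def onBdry (x : V3) : Prop := x 2 = 0 ∨ x 2 = 1

/-- Horizontal periodicity (period 1 in x₁ and x₂) of a scalar function. -/
def hperS (f : V3 → ℝ) : Prop :=
  (∀ x, f (x + Pi.single 0 1) = f x) ∧ (∀ x, f (x + Pi.single 1 1) = f x)

/-- Horizontal periodicity (period 1 in x₁ and x₂) of a vector field. -/
def hperV (u : V3 → V3) : Prop :=
  (∀ x, u (x + Pi.single 0 1) = u x) ∧ (∀ x, u (x + Pi.single 1 1) = u x)

/-- The unit cube `Q = [0,1]³`. -/
def Q3 : Set V3 := Set.Icc 0 1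

/-- Tangential derivatives of a function vanishing on the boundary vanish there. -/
theorem pd_tangential (f : V3 → ℝ) (hf : Differentiable ℝ f)
    (h0 : ∀ y, onBdry y → f y = 0) (i : Fin 3) (hi : i ≠ 2) (x : V3) (hx : onBdry x) :
    pd i f x = 0 := by
  unfold pd
  rw [← (hf x).lineDeriv_eq_fderiv]
  have hc : (fun t : ℝ => f (x + t • (Pi.single i 1 : V3))) = fun _ => 0 := by
    funext t
    apply h0
    have : (x + t • (Pi.single i 1 : V3)) 2 = x 2 := by
      simp [Pi.single_apply, hi.symm]
    unfold onBdry
    rw [this]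
    exact hx
  unfold lineDeriv
  rw [hc]
  simp

/-- Lemma 5.1, first part: for divergence-free `u` (Navier-slip b.c.) and `B`
(insulating b.c.), `curl(B × u) × n = ((u·∇)B − (B·∇)u) × n = 0` on `∂Ω`. -/
theorem stmt_0 (u B : V3 → V3)
    (hu : ContDiff ℝ (⊤ : ℕ∞) u) (hB : ContDiff ℝ (⊤ : ℕ∞) B)
    (hdivu : ∀ x, vdiv u x = 0) (hdivB : ∀ x, vdiv B x = 0)
    (hubc : ∀ x, onBdry x →
      u x 2 = 0 ∧ pd 2 (fun y => u y 0) x = 0 ∧ pd 2 (fun y => u y 1) x = 0)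
    (hBbc : ∀ x, onBdry x → B x 0 = 0 ∧ B x 1 = 0) :
    ∀ x, onBdry x →
      (adv u B x - adv B u x) 0 = 0 ∧ (adv u B x - adv B u x) 1 = 0 := by
  intro x hx
  have hd : Differentiable ℝ B := hB.differentiable (by simp)
  have hd' : ∀ j, Differentiable ℝ (fun y => B y j) := fun j => differentiable_pi.1 hd j
  obtain ⟨h1, h2, h3⟩ := hubc x hx
  obtain ⟨h4, h5⟩ := hBbc x hx
  have a00 := pd_tangential _ (hd' 0) (fun y hy => (hBbc y hy).1) 0 (by decide) x hx
  have a10 := pd_tangential _ (hd' 0) (fun y hy => (hBbc y hy).1) 1 (by decide) x hx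
  have a01 := pd_tangential _ (hd' 1) (fun y hy => (hBbc y hy).2) 0 (by decide) x hx
  have a11 := pd_tangential _ (hd' 1) (fun y hy => (hBbc y hy).2) 1 (by decide) x hx
  constructor
  · simp only [Pi.sub_apply, adv, h1, h2, h4, h5, a00, a10]
    ring
  · simp only [Pi.sub_apply, adv, h1, h3, h4, h5, a01, a11]
    ring
end
end

section
/- Let B : ℝ³ → ℝ³ be a smooth vector field with div B = 0 on ℝ³, satisfying the insulating boundary condition (B₁ = B₂ = 0 at every point of ∂Ω) and in addition ΔB × n = 0 on ∂Ω (i.e. (ΔB)₁ = (ΔB)₂ = 0 at every point of ∂Ω). Set ω_B = curl B. Then curl(ω_B × B) × n = ((B·∇)ω_B − (ω_B·∇)B) × n = 0 on ∂Ω; that is, the first and second components of (B·∇)(curl B) − ((curl B)·∇)B vanish at every point of ∂Ω. -/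
noncomputable section

open MeasureTheory

theorem pd_tan (f : V3 → ℝ) (hf : ∀ x, onBdry x → f x = 0) (i : Fin 3) (hi : i ≠ 2)
    (x : V3) (hx : onBdry x) : pd i f x = 0 := by
  unfold pd
  by_cases hd : DifferentiableAt ℝ f x
  · rw [← hd.lineDeriv_eq_fderiv]
    unfold lineDeriv
    have : (fun t : ℝ => f (x + t • (Pi.single i 1 : V3))) = fun _ => 0 := by
      funext t
      apply hf
      have h2 : (x + t • (Pi.single i 1 : V3)) 2 = x 2 := by
        simp [Pi.single_eq_of_ne (Ne.symm hi)]
      unfold onBdry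
      rw [h2]
      exact hx
    rw [this]
    simp
  · rw [fderiv_zero_of_not_differentiableAt hd]
    simp

theorem pd_smooth (f : V3 → ℝ) (hf : ContDiff ℝ (⊤ : ℕ∞) f) (i : Fin 3) :
    ContDiff ℝ (⊤ : ℕ∞) (pd i f) := by
  unfold pd
  exact (hf.fderiv_right (m := (⊤ : ℕ∞)) (by simp)).clm_apply contDiff_const

theorem pd_comm (f : V3 → ℝ) (hf : ContDiff ℝ (⊤ : ℕ∞) f) (i j : Fin 3) (x : V3) :
    pd i (pd j f) x = pd j (pd i f) x := by
  have hs : IsSymmSndFDerivAt ℝ f x :=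
    hf.contDiffAt.isSymmSndFDerivAt (by
      simp only [minSmoothness_of_isRCLikeNormedField]
      exact WithTop.coe_le_coe.2 (le_top : (2 : ℕ∞) ≤ ⊤))
  have hd : DifferentiableAt ℝ (fderiv ℝ f) x :=
    ((hf.fderiv_right (m := (⊤ : ℕ∞)) (by simp)).differentiable (by simp)) x
  have key : ∀ a b : Fin 3, pd a (pd b f) x
      = fderiv ℝ (fderiv ℝ f) x (Pi.single a 1) (Pi.single b 1) := by
    intro a b
    unfold pd
    rw [fderiv_clm_apply hd (differentiableAt_const _)]
    simp
  rw [key, key]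
  exact hs _ _

theorem pd_sub (f g : V3 → ℝ) (hf : ContDiff ℝ (⊤ : ℕ∞) f) (hg : ContDiff ℝ (⊤ : ℕ∞) g)
    (i : Fin 3) (x : V3) : pd i (fun y => f y - g y) x = pd i f x - pd i g x := by
  unfold pd
  rw [fderiv_fun_sub (hf.differentiable (by simp) x) (hg.differentiable (by simp) x)]
  simp

/-- Lemma 5.2: for divergence-free `B` with the insulating b.c. and `ΔB × n = 0` on `∂Ω`,
setting `ω_B = curl B`, one has `curl(ω_B × B) × n = ((B·∇)ω_B − (ω_B·∇)B) × n = 0` on `∂Ω`. -/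
theorem stmt_2 (B : V3 → V3)
    (hB : ContDiff ℝ (⊤ : ℕ∞) B)
    (hdivB : ∀ x, vdiv B x = 0)
    (hBbc : ∀ x, onBdry x → B x 0 = 0 ∧ B x 1 = 0)
    (hlapB : ∀ x, onBdry x → vlap B x 0 = 0 ∧ vlap B x 1 = 0) :
    ∀ x, onBdry x →
      (adv B (vcurl B) x - adv (vcurl B) B x) 0 = 0 ∧
      (adv B (vcurl B) x - adv (vcurl B) B x) 1 = 0 := by
  have hc : ∀ i, ContDiff ℝ (⊤ : ℕ∞) (fun y => B y i) := fun i => contDiff_pi.1 hB i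
  have h0 : ∀ x, onBdry x → (fun y => B y 0) x = 0 := fun x hx => (hBbc x hx).1
  have h1 : ∀ x, onBdry x → (fun y => B y 1) x = 0 := fun x hx => (hBbc x hx).2
  have t00 := pd_tan _ h0 0 (by decide)
  have t01 := pd_tan _ h0 1 (by decide)
  have t10 := pd_tan _ h1 0 (by decide)
  have t11 := pd_tan _ h1 1 (by decide)
  have t22 : ∀ x, onBdry x → pd 2 (fun y => B y 2) x = 0 := by
    intro x hx
    have h := hdivB x
    unfold vdiv at h
    rw [t00 x hx, t11 x hx] at h
    linarith
  intro x hx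
  have l0 : pd 2 (pd 2 (fun y => B y 0)) x = 0 := by
    have h := (hlapB x hx).1
    unfold vlap lap at h
    rw [pd_tan _ t00 0 (by decide) x hx, pd_tan _ t01 1 (by decide) x hx] at h
    linarith
  have l1 : pd 2 (pd 2 (fun y => B y 1)) x = 0 := by
    have h := (hlapB x hx).2
    unfold vlap lap at h
    rw [pd_tan _ t10 0 (by decide) x hx, pd_tan _ t11 1 (by decide) x hx] at h
    linarith
  have m0 : pd 2 (pd 0 (fun y => B y 2)) x = 0 := by
    rw [pd_comm _ (hc 2)]
    exact pd_tan _ t22 0 (by decide) x hx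
  have m1 : pd 2 (pd 1 (fun y => B y 2)) x = 0 := by
    rw [pd_comm _ (hc 2)]
    exact pd_tan _ t22 1 (by decide) x hx
  have w2 : vcurl B x 2 = 0 := by
    simp [vcurl, t10 x hx, t01 x hx]
  have d0 : pd 2 (fun y => vcurl B y 0) x = 0 := by
    change pd 2 (fun y => pd 1 (fun y => B y 2) y - pd 2 (fun y => B y 1) y) x = 0
    rw [pd_sub _ _ (pd_smooth _ (hc 2) 1) (pd_smooth _ (hc 1) 2), m1, l1, sub_zero]
  have d1 : pd 2 (fun y => vcurl B y 1) x = 0 := by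
    change pd 2 (fun y => pd 2 (fun y => B y 0) y - pd 0 (fun y => B y 2) y) x = 0
    rw [pd_sub _ _ (pd_smooth _ (hc 0) 2) (pd_smooth _ (hc 2) 0), m0, l0, sub_zero]
  obtain ⟨b0, b1⟩ := hBbc x hx
  constructor
  · simp only [Pi.sub_apply, adv]
    rw [b0, b1, d0, w2, t00 x hx, t01 x hx]
    ring
  · simp only [Pi.sub_apply, adv]
    rw [b0, b1, d1, w2, t10 x hx, t11 x hx]
    ring
end
end

section
/- Let μ > 0 and let u, B : ℝ × ℝ³ → ℝ³ be smooth (jointly in (t,x)) such that for every t, div u(t,·) = 0 and div B(t,·) = 0 on ℝ³, and the induction equation ∂ₜB − μΔB = curl(u × B) holds at every (t,x) ∈ ℝ × ℝ³. Assume that for every t, u(t,·) satisfies the Navier-slip boundary condition (u₃ = ∂₃u₁ = ∂₃u₂ = 0 on ∂Ω) and B(t,·) satisfies the insulating boundary condition (B₁ = B₂ = 0 on ∂Ω). Then for every t, ΔB(t,·) × n = 0 on ∂Ω; that is, (ΔB)₁(t,x) = (ΔB)₂(t,x) = 0 for every t and every x ∈ ∂Ω. -/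
noncomputable section

open MeasureTheory

theorem pd_tangent_zero (i : Fin 3) (hi : i ≠ 2) (f : V3 → ℝ) (x : V3)
    (hf : DifferentiableAt ℝ f x) (hx : onBdry x) (h : ∀ y, onBdry y → f y = 0) :
    pd i f x = 0 := by
  unfold pd
  have h1 := hf.hasFDerivAt.hasLineDerivAt (Pi.single i 1)
  have h2 : (fun t : ℝ => f (x + t • (Pi.single i 1 : V3))) = fun _ => 0 := by
    funext t
    apply h
    have : (x + t • (Pi.single i 1 : V3)) 2 = x 2 := by
      simp [Pi.single_apply, hi.symm]
    unfold onBdry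
    rw [this]
    exact hx
  unfold HasLineDerivAt at h1
  rw [h2] at h1
  exact h1.unique (hasDerivAt_const (0 : ℝ) (0 : ℝ))

theorem pd_mul_sub (i : Fin 3) (a b c d : V3 → ℝ) (x : V3)
    (ha : DifferentiableAt ℝ a x) (hb : DifferentiableAt ℝ b x)
    (hc : DifferentiableAt ℝ c x) (hd : DifferentiableAt ℝ d x) :
    pd i (fun y => a y * b y - c y * d y) x
      = a x * pd i b x + b x * pd i a x - (c x * pd i d x + d x * pd i c x) := by
  unfold pd
  have e : (fun y => a y * b y - c y * d y) = a * b - c * d := rfl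
  rw [e, ((ha.hasFDerivAt.mul hb.hasFDerivAt).sub (hc.hasFDerivAt.mul hd.hasFDerivAt)).fderiv]
  simp

/-- If `(u,B)` is a smooth solution of the induction equation `∂ₜB − μΔB = curl(u × B)`
with divergence-free `u(t,·)`, `B(t,·)`, the Navier-slip b.c. for `u` and the insulating
b.c. for `B`, then `ΔB(t,·) × n = 0` on `∂Ω` for every `t`. -/
theorem stmt_7 (mu : ℝ) (hmu : 0 < mu) (u B : ℝ → V3 → V3)
    (hu : ContDiff ℝ (⊤ : ℕ∞) (Function.uncurry u))
    (hB : ContDiff ℝ (⊤ : ℕ∞) (Function.uncurry B))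
    (hdivu : ∀ t x, vdiv (u t) x = 0) (hdivB : ∀ t x, vdiv (B t) x = 0)
    (hind : ∀ t x (i : Fin 3),
      deriv (fun s => B s x i) t - mu * vlap (B t) x i
        = vcurl (fun y => cross (u t y) (B t y)) x i)
    (hubc : ∀ t x, onBdry x →
      u t x 2 = 0 ∧ pd 2 (fun y => u t y 0) x = 0 ∧ pd 2 (fun y => u t y 1) x = 0)
    (hBbc : ∀ t x, onBdry x → B t x 0 = 0 ∧ B t x 1 = 0) :
    ∀ t x, onBdry x → vlap (B t) x 0 = 0 ∧ vlap (B t) x 1 = 0 := by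
  intro t x hx
  have du : ∀ i, DifferentiableAt ℝ (fun y => u t y i) x := by
    intro i
    have h1 : Differentiable ℝ (Function.uncurry u) := hu.differentiable (by simp)
    have h2 : Differentiable ℝ (fun y : V3 => Function.uncurry u (t, y)) :=
      h1.comp (by fun_prop)
    exact differentiableAt_pi.1 (h2 x) i
  have dB : ∀ i, DifferentiableAt ℝ (fun y => B t y i) x := by
    intro i
    have h1 : Differentiable ℝ (Function.uncurry B) := hB.differentiable (by simp)
    have h2 : Differentiable ℝ (fun y : V3 => Function.uncurry B (t, y)) :=
      h1.comp (by fun_prop)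
    exact differentiableAt_pi.1 (h2 x) i
  obtain ⟨u2, u02, u12⟩ := hubc t x hx
  obtain ⟨B0, B1⟩ := hBbc t x hx
  have p00 := pd_tangent_zero 0 (by decide) _ x (dB 0) hx (fun y hy => (hBbc t y hy).1)
  have p10 := pd_tangent_zero 1 (by decide) _ x (dB 0) hx (fun y hy => (hBbc t y hy).1)
  have p01 := pd_tangent_zero 0 (by decide) _ x (dB 1) hx (fun y hy => (hBbc t y hy).2)
  have p11 := pd_tangent_zero 1 (by decide) _ x (dB 1) hx (fun y hy => (hBbc t y hy).2)
  have p22 : pd 2 (fun y => B t y 2) x = 0 := by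
    have := hdivB t x
    unfold vdiv at this
    rw [p00, p11] at this
    simpa using this
  have t0 : deriv (fun s => B s x 0) t = 0 := by
    have : (fun s => B s x 0) = fun _ => 0 := funext fun s => (hBbc s x hx).1
    rw [this]; simp
  have t1 : deriv (fun s => B s x 1) t = 0 := by
    have : (fun s => B s x 1) = fun _ => 0 := funext fun s => (hBbc s x hx).2
    rw [this]; simp
  have e0 := hind t x 0
  have e1 := hind t x 1
  simp only [vcurl, cross, Matrix.cons_val_zero, Matrix.cons_val_one, Matrix.cons_val] at e0 e1
  rw [pd_mul_sub _ _ _ _ _ x (du 0) (dB 1) (du 1) (dB 0),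
    pd_mul_sub _ _ _ _ _ x (du 2) (dB 0) (du 0) (dB 2)] at e0
  rw [pd_mul_sub _ _ _ _ _ x (du 1) (dB 2) (du 2) (dB 1),
    pd_mul_sub _ _ _ _ _ x (du 0) (dB 1) (du 1) (dB 0)] at e1
  rw [t0, u2, u02, B0, B1, p11, p10, p22] at e0
  rw [t1, u2, u12, B0, B1, p01, p00, p22] at e1
  constructor
  · have : mu * vlap (B t) x 0 = 0 := by linarith
    exact (mul_eq_zero.1 this).resolve_left hmu.ne'
  · have : mu * vlap (B t) x 1 = 0 := by linarith
    exact (mul_eq_zero.1 this).resolve_left hmu.ne'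
end
end
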